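/- Let n ≥ 5 be an integer and let p(X) = X^n − 2X^{n−1} − X + 1, regarded as a polynomial with integer coefficients. Then: (1) p has a real root in the open interval ((1/2)^{2/√(n−1)}, 1); (2) p has a real root in the open interval (2, 2 + 2^{2−n}); (3) every complex root of p other than these two has modulus strictly less than 1; and (4) p is irreducible over ℚ. -/

import Mathlib

open Polynomial

/-!
In terms of `u = 1 / z` and `m = n - 1`, the equation `p(z) = 0` reads `(2 - u ^ m) (1 - u) = 1`,
i.e. `u` is a fixed point of `u ↦ 1 - 1 / (2 - u ^ m)`. Any fixed point in the closed unit disc has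
modulus at most `2 / 3`, and there the map contracts distances by the factor `3 / 4`. So `p` has at
most one root outside the open unit disc. Sign changes locate the two real roots; the larger one is
then the only root of modulus at least `1`, and it is simple because the derivative of `p` is
positive there. In a factorization of `p` over `ℤ` it is a root of exactly one of the two monic
factors, so the other factor has all its roots in the open unit disc and a nonzero integer constant
coefficient, which forces it to be constant.
-/

theorem norm_pow_sub_pow_le {R : Type*} [SeminormedCommRing R] [NormOneClass R] {u v : R} {r : ℝ}
    (hu : ‖u‖ ≤ r) (hv : ‖v‖ ≤ r) (n : ℕ) :
    ‖u ^ n - v ^ n‖ ≤ n * r ^ (n - 1) * ‖u - v‖ := by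
  have hr : 0 ≤ r := (norm_nonneg u).trans hu
  have term_le : ∀ i ∈ Finset.range n, ‖u ^ i * v ^ (n - 1 - i)‖ ≤ r ^ (n - 1) := by
    intro i hi
    calc ‖u ^ i * v ^ (n - 1 - i)‖
        ≤ ‖u ^ i‖ * ‖v ^ (n - 1 - i)‖ := norm_mul_le _ _
      _ ≤ ‖u‖ ^ i * ‖v‖ ^ (n - 1 - i) := by gcongr <;> exact norm_pow_le _ _
      _ ≤ r ^ i * r ^ (n - 1 - i) := by gcongr
      _ = r ^ (n - 1) := by
        rw [← pow_add, Nat.add_sub_of_le (Nat.le_sub_one_of_lt (Finset.mem_range.1 hi))]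
  calc ‖u ^ n - v ^ n‖
      = ‖(∑ i ∈ Finset.range n, u ^ i * v ^ (n - 1 - i)) * (u - v)‖ := by rw [geom_sum₂_mul]
    _ ≤ ‖∑ i ∈ Finset.range n, u ^ i * v ^ (n - 1 - i)‖ * ‖u - v‖ := norm_mul_le _ _
    _ ≤ n * r ^ (n - 1) * ‖u - v‖ := by
      gcongr
      simpa using norm_sum_le_of_le _ term_le

section Irreducibility

theorem exists_aeval_eq_zero_one_le_norm {f : ℤ[X]} (hf : f.Monic) (hdeg : f.natDegree ≠ 0)
    (h0 : f.coeff 0 ≠ 0) : ∃ z : ℂ, aeval z f = 0 ∧ 1 ≤ ‖z‖ := by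
  by_contra! hroots
  set g := f.map (Int.castRingHom ℂ)
  have hsplits : g.Splits := IsAlgClosed.splits g
  have roots_ne_zero : g.roots ≠ 0 := by
    rwa [Ne, ← Multiset.card_eq_zero, ← hsplits.natDegree_eq_card_roots, hf.natDegree_map]
  have norm_lt_one_of_mem : ∀ z ∈ g.roots, ‖z‖ < 1 := by
    intro z hz
    apply hroots
    rw [aeval_def, ← eval_map]
    exact isRoot_of_mem_roots hz
  have norm_prod_lt_one : ‖g.roots.prod‖ < 1 :=
    Multiset.prod_induction_nonempty (fun z : ℂ ↦ ‖z‖ < 1)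
      (fun a b ha hb ↦ by
        rw [norm_mul]
        exact mul_lt_one_of_nonneg_of_lt_one_left (norm_nonneg a) ha hb.le)
      roots_ne_zero norm_lt_one_of_mem
  have norm_coeff_zero : ‖(f.coeff 0 : ℂ)‖ = ‖g.roots.prod‖ := by
    simpa [g] using congrArg norm (hsplits.coeff_zero_eq_prod_roots_of_monic (hf.map _))
  rw [← norm_coeff_zero, Complex.norm_intCast] at norm_prod_lt_one
  exact h0 (Int.abs_lt_one_iff.1 (mod_cast norm_prod_lt_one))

theorem irreducible_of_simple_root_of_norm_lt_one {f : ℤ[X]} (hf : f.Monic) (h0 : f.coeff 0 ≠ 0)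
    {θ : ℂ} (hθ : aeval θ f = 0) (hsimple : aeval θ (derivative f) ≠ 0)
    (hroots : ∀ z : ℂ, aeval z f = 0 → z ≠ θ → ‖z‖ < 1) : Irreducible f := by
  have natDegree_cofactor : ∀ g h : ℤ[X], h.Monic → g * h = f → aeval θ g = 0 →
      h.natDegree = 0 := by
    rintro g h hh rfl hgθ
    by_contra hdeg
    have hh0 : h.coeff 0 ≠ 0 := right_ne_zero_of_mul (mul_coeff_zero g h ▸ h0)
    obtain ⟨z, hz, one_le_norm⟩ := exists_aeval_eq_zero_one_le_norm hh hdeg hh0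
    have hzθ : z ≠ θ := by
      rintro rfl
      exact hsimple (by simp [derivative_mul, hgθ, hz])
    exact one_le_norm.not_gt (hroots z (by simp [hz]) hzθ)
  rw [hf.irreducible_iff_natDegree]
  refine ⟨by rintro rfl; simp at hθ, fun g h hg hh hgh ↦ ?_⟩
  rw [← hgh, map_mul, mul_eq_zero] at hθ
  rcases hθ with hgθ | hhθ
  · exact Or.inr (natDegree_cofactor g h hh hgh hgθ)
  · exact Or.inl (natDegree_cofactor h g hg (by rw [mul_comm, hgh]) hhθ)

end Irreducibility

section Contraction

variable {m : ℕ} {u v : ℂ}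

theorem norm_le_two_thirds_of_two_sub_pow_mul_one_sub_eq_one (hu : ‖u‖ ≤ 1)
    (h : (2 - u ^ m) * (1 - u) = 1) : ‖u‖ ≤ 2 / 3 := by
  have norm_le : ‖1 - 2 * u‖ ≤ ‖1 - u‖ := by
    have heq : 1 - 2 * u = u ^ m * (1 - u) := by linear_combination h
    rw [heq, norm_mul, norm_pow]
    exact mul_le_of_le_one_left (norm_nonneg _) (pow_le_one₀ (norm_nonneg u) hu)
  have normSq_le : 3 * ‖u‖ ^ 2 ≤ 2 * u.re := by
    have hsq : ‖1 - 2 * u‖ ^ 2 ≤ ‖1 - u‖ ^ 2 := by gcongr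
    simp only [Complex.sq_norm, Complex.normSq_apply, Complex.sub_re, Complex.sub_im,
      Complex.mul_re, Complex.mul_im, Complex.one_re, Complex.one_im, Complex.re_ofNat,
      Complex.im_ofNat] at hsq ⊢
    linarith
  nlinarith [Complex.re_le_norm u, norm_nonneg u]

theorem norm_one_sub_le_of_two_sub_pow_mul_one_sub_eq_one (hm : m ≠ 0) (hu : ‖u‖ ≤ 1)
    (h : (2 - u ^ m) * (1 - u) = 1) : ‖1 - u‖ ≤ 3 / 4 := by
  have norm_pow_le : ‖u ^ m‖ ≤ 2 / 3 := by
    rw [norm_pow]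
    exact (pow_le_of_le_one (norm_nonneg u) hu hm).trans
      (norm_le_two_thirds_of_two_sub_pow_mul_one_sub_eq_one hu h)
  have le_norm : 4 / 3 ≤ ‖2 - u ^ m‖ := by
    have := norm_sub_norm_le 2 (u ^ m)
    rw [Complex.norm_ofNat] at this
    linarith
  have norm_mul_eq : ‖2 - u ^ m‖ * ‖1 - u‖ = 1 := by rw [← norm_mul, h, norm_one]
  nlinarith [norm_nonneg (1 - u)]

theorem natCast_mul_two_thirds_pow_le (m : ℕ) : (m : ℝ) * (2 / 3) ^ (m - 1) ≤ 4 / 3 := by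
  match m with
  | 0 => norm_num
  | 1 => norm_num
  | k + 2 =>
    have bernoulli : 1 + (k : ℝ) * (1 / 2) ≤ (1 + 1 / 2) ^ k :=
      one_add_mul_le_pow (by norm_num) k
    calc ((k + 2 : ℕ) : ℝ) * (2 / 3) ^ (k + 1)
        = 4 / 3 * ((1 + k * (1 / 2)) * (2 / 3) ^ k) := by push_cast; ring
      _ ≤ 4 / 3 * ((1 + 1 / 2) ^ k * (2 / 3) ^ k) := by gcongr
      _ = 4 / 3 := by rw [← mul_pow]; norm_num

theorem eq_of_two_sub_pow_mul_one_sub_eq_one (hm : m ≠ 0) (hu : ‖u‖ ≤ 1) (hv : ‖v‖ ≤ 1)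
    (hu_eq : (2 - u ^ m) * (1 - u) = 1) (hv_eq : (2 - v ^ m) * (1 - v) = 1) : u = v := by
  have sub_eq : v - u = (1 - u) * (1 - v) * (u ^ m - v ^ m) := by
    linear_combination (1 - v) * hu_eq - (1 - u) * hv_eq
  have pow_sub_le : ‖u ^ m - v ^ m‖ ≤ 4 / 3 * ‖u - v‖ :=
    (norm_pow_sub_pow_le (norm_le_two_thirds_of_two_sub_pow_mul_one_sub_eq_one hu hu_eq)
      (norm_le_two_thirds_of_two_sub_pow_mul_one_sub_eq_one hv hv_eq) m).trans
      (mul_le_mul_of_nonneg_right (natCast_mul_two_thirds_pow_le m) (norm_nonneg _))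
  have contraction : ‖u - v‖ ≤ 3 / 4 * ‖u - v‖ :=
    calc ‖u - v‖ = ‖1 - u‖ * ‖1 - v‖ * ‖u ^ m - v ^ m‖ := by
          rw [norm_sub_rev, sub_eq, norm_mul, norm_mul]
      _ ≤ 3 / 4 * (3 / 4) * (4 / 3 * ‖u - v‖) := by
        gcongr
        exacts [norm_one_sub_le_of_two_sub_pow_mul_one_sub_eq_one hm hu hu_eq,
          norm_one_sub_le_of_two_sub_pow_mul_one_sub_eq_one hm hv hv_eq]
      _ = 3 / 4 * ‖u - v‖ := by ring
  exact sub_eq_zero.1 (norm_le_zero_iff.1 (by linarith))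

end Contraction

section RpowBounds

variable {s : ℝ}

theorem half_rpow_two_div_le (hs : 1 ≤ s) : (1 / 2 : ℝ) ^ (2 / s) ≤ 1 - 3 / (4 * s) := by
  calc (1 / 2 : ℝ) ^ (2 / s) = (1 + -3 / 4) ^ (1 / s) := by
        rw [show 2 / s = 2 * (1 / s) by ring, Real.rpow_mul (by norm_num), Real.rpow_two]
        norm_num
    _ ≤ 1 + 1 / s * (-3 / 4) :=
      rpow_one_add_le_one_add_mul_self (by norm_num) (by positivity)
        ((div_le_one (by linarith)).2 hs)
    _ = 1 - 3 / (4 * s) := by ring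

theorem two_mul_half_rpow_two_mul_lt (hs : 1 ≤ s) :
    2 * (1 / 2 : ℝ) ^ (2 * s) < 3 / (4 * s) := by
  have four_rpow : (1 / 2 : ℝ) ^ (2 * s) = ((1 + 3) ^ s)⁻¹ := by
    rw [Real.rpow_mul (by norm_num), Real.rpow_two, ← Real.inv_rpow (by norm_num)]
    norm_num
  have bernoulli : 1 + s * 3 ≤ (1 + 3 : ℝ) ^ s :=
    one_add_mul_self_le_rpow_one_add (by norm_num) hs
  rw [four_rpow, ← div_eq_mul_inv, div_lt_div_iff₀ (by positivity) (by positivity)]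
  linarith

theorem half_rpow_two_div_sqrt_pow (m : ℕ) :
    ((1 / 2 : ℝ) ^ (2 / √m)) ^ m = (1 / 2) ^ (2 * √m) := by
  rw [← Real.rpow_mul_natCast (by norm_num), div_mul_eq_mul_div, mul_div_assoc, Real.div_sqrt]

end RpowBounds

/-- The polynomial `X ^ n - 2 X ^ (n - 1) - X + 1`, indexed by `m = n - 1`. For `m ≥ 1` its largest
real root is a Pisot number: all the other roots lie in the open unit disc. -/
noncomputable def pisotPoly (m : ℕ) : ℤ[X] := X ^ (m + 1) - 2 * X ^ m - X + 1

namespace pisotPoly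

variable {m : ℕ}

theorem aeval_eq {A : Type*} [CommRing A] (x : A) :
    aeval x (pisotPoly m) = x ^ m * (x - 2) - (x - 1) := by
  simp only [pisotPoly, map_add, map_sub, map_mul, map_pow, map_one, map_ofNat, aeval_X]
  ring

theorem monic (hm : m ≠ 0) : (pisotPoly m).Monic := by
  unfold pisotPoly
  monicity!

theorem coeff_zero (hm : m ≠ 0) : (pisotPoly m).coeff 0 = 1 := by
  simp [pisotPoly, coeff_zero_eq_eval_zero, hm]

theorem aeval_derivative_pos (hm : m ≠ 0) {x : ℝ} (hx : 2 < x) :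
    0 < aeval x (derivative (pisotPoly m)) := by
  obtain ⟨k, rfl⟩ := Nat.exists_eq_succ_of_ne_zero hm
  have heq : aeval x (derivative (pisotPoly (k + 1)))
      = x ^ k * ((k + 1) * (x - 2) + x) - 1 := by
    simp only [pisotPoly, derivative_mul, derivative_X_pow_succ, derivative_X, derivative_one,
      derivative_ofNat, map_add, map_sub, map_mul, map_pow, map_one, map_zero, map_ofNat,
      map_natCast, aeval_X, Nat.cast_add, Nat.cast_one]
    ring
  have hpow : 1 ≤ x ^ k := one_le_pow₀ (by linarith)
  have hfactor : 1 < (k + 1) * (x - 2) + x := by nlinarith [k.cast_nonneg (α := ℝ)]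
  rw [heq]
  nlinarith

theorem exists_root_mem_Ioo_lt_one (hm : m ≠ 0) :
    ∃ x ∈ Set.Ioo ((1 / 2 : ℝ) ^ (2 / √m)) 1, aeval x (pisotPoly m) = 0 := by
  have hs : 1 ≤ √(m : ℝ) := Real.one_le_sqrt.2 (mod_cast Nat.one_le_iff_ne_zero.2 hm)
  set a := (1 / 2 : ℝ) ^ (2 / √m) with ha
  have a_pos : 0 < a := by positivity
  have a_lt_one : a < 1 := Real.rpow_lt_one (by norm_num) (by norm_num) (by positivity)
  have pow_lt : 2 * a ^ m < 1 - a := by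
    rw [ha, half_rpow_two_div_sqrt_pow]
    linarith [half_rpow_two_div_le hs, two_mul_half_rpow_two_mul_lt hs]
  have value_at_a : 0 < aeval a (pisotPoly m) := by
    rw [aeval_eq]
    nlinarith [pow_pos a_pos m]
  have value_at_one : aeval (1 : ℝ) (pisotPoly m) < 0 := by
    rw [aeval_eq]
    norm_num
  exact intermediate_value_Ioo' a_lt_one.le (pisotPoly m).continuous_aeval.continuousOn
    ⟨value_at_one, value_at_a⟩

theorem exists_root_mem_Ioo_two (hm : m ≠ 0) :
    ∃ x ∈ Set.Ioo (2 : ℝ) (2 + 2 ^ (1 - m : ℝ)), aeval x (pisotPoly m) = 0 := by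
  set d := (2 : ℝ) ^ (1 - m : ℝ) with hd
  have d_pos : 0 < d := by positivity
  have d_le_one : d ≤ 1 := Real.rpow_le_one_of_one_le_of_nonpos (by norm_num)
    (sub_nonpos.2 (mod_cast Nat.one_le_iff_ne_zero.2 hm))
  have two_pow_mul_d : 2 ^ m * d = 2 := by
    rw [hd, ← Real.rpow_natCast, ← Real.rpow_add two_pos, add_sub_cancel, Real.rpow_one]
  have value_at_two : aeval (2 : ℝ) (pisotPoly m) < 0 := by
    rw [aeval_eq]
    norm_num
  have value_at_two_add : 0 < aeval (2 + d) (pisotPoly m) := by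
    have hpow : (2 : ℝ) ^ m < (2 + d) ^ m := by gcongr; linarith
    rw [aeval_eq]
    nlinarith
  exact intermediate_value_Ioo (by linarith) (pisotPoly m).continuous_aeval.continuousOn
    ⟨value_at_two, value_at_two_add⟩

theorem two_sub_inv_pow_mul_one_sub_inv_eq_one {K : Type*} [Field K] {z : K} (hz : z ≠ 0)
    (h : aeval z (pisotPoly m) = 0) : (2 - z⁻¹ ^ m) * (1 - z⁻¹) = 1 := by
  rw [aeval_eq] at h
  rw [inv_pow]
  field_simp
  linear_combination h

theorem root_unique_of_one_le_norm (hm : m ≠ 0) {z w : ℂ} (hz : aeval z (pisotPoly m) = 0)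
    (hw : aeval w (pisotPoly m) = 0) (one_le_z : 1 ≤ ‖z‖) (one_le_w : 1 ≤ ‖w‖) : z = w := by
  have z_ne_zero : z ≠ 0 := norm_pos_iff.1 (by linarith)
  have w_ne_zero : w ≠ 0 := norm_pos_iff.1 (by linarith)
  have norm_inv_z : ‖z⁻¹‖ ≤ 1 := norm_inv z ▸ inv_le_one_of_one_le₀ one_le_z
  have norm_inv_w : ‖w⁻¹‖ ≤ 1 := norm_inv w ▸ inv_le_one_of_one_le₀ one_le_w
  exact inv_injective (eq_of_two_sub_pow_mul_one_sub_eq_one hm norm_inv_z norm_inv_w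
    (two_sub_inv_pow_mul_one_sub_inv_eq_one z_ne_zero hz)
    (two_sub_inv_pow_mul_one_sub_inv_eq_one w_ne_zero hw))

theorem norm_lt_one_of_ne (hm : m ≠ 0) {x : ℝ} (hx : 1 ≤ x) (hroot : aeval x (pisotPoly m) = 0)
    {z : ℂ} (hz : aeval z (pisotPoly m) = 0) (hne : z ≠ x) : ‖z‖ < 1 := by
  have hrootC : aeval (x : ℂ) (pisotPoly m) = 0 :=
    (aeval_algebraMap_eq_zero_iff ℂ x _).2 hroot
  by_contra! one_le_norm
  refine hne (root_unique_of_one_le_norm hm hz hrootC one_le_norm ?_)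
  rwa [Complex.norm_of_nonneg (by linarith)]

theorem irreducible (hm : m ≠ 0) : Irreducible (pisotPoly m) := by
  obtain ⟨x, ⟨two_lt, -⟩, hx⟩ := exists_root_mem_Ioo_two hm
  refine irreducible_of_simple_root_of_norm_lt_one (θ := x) (monic hm) (by simp [coeff_zero hm])
    ((aeval_algebraMap_eq_zero_iff ℂ x _).2 hx) ?_
    fun z ↦ norm_lt_one_of_ne hm (by linarith) hx
  exact (aeval_algebraMap_eq_zero_iff ℂ x _).not.2 (aeval_derivative_pos hm two_lt).ne'

end pisotPoly

theorem statement16_general (n : ℕ) (hn : 2 ≤ n)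
    (p : Polynomial ℤ) (hp : p = X ^ n - 2 * X ^ (n - 1) - X + 1) :
    ∃ x₁ x₂ : ℝ,
      x₁ ∈ Set.Ioo ((1 / 2 : ℝ) ^ ((2 : ℝ) / Real.sqrt ((n : ℝ) - 1))) 1 ∧
      aeval x₁ p = 0 ∧
      x₂ ∈ Set.Ioo (2 : ℝ) (2 + (2 : ℝ) ^ ((2 : ℝ) - (n : ℝ))) ∧
      aeval x₂ p = 0 ∧
      (∀ z : ℂ, aeval z p = 0 → z ≠ (x₁ : ℂ) → z ≠ (x₂ : ℂ) → ‖z‖ < 1) ∧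
      Irreducible (p.map (Int.castRingHom ℚ)) := by
  obtain ⟨m, rfl⟩ : ∃ m, n = m + 1 := ⟨n - 1, by lia⟩
  have hm : m ≠ 0 := by lia
  obtain rfl : p = pisotPoly m := hp
  obtain ⟨x₁, hx₁, root₁⟩ := pisotPoly.exists_root_mem_Ioo_lt_one hm
  obtain ⟨x₂, hx₂, root₂⟩ := pisotPoly.exists_root_mem_Ioo_two hm
  have cast_sub_one : ((m + 1 : ℕ) : ℝ) - 1 = m := by push_cast; ring
  have two_sub_cast : 2 - ((m + 1 : ℕ) : ℝ) = 1 - m := by push_cast; ring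
  rw [cast_sub_one, two_sub_cast]
  exact ⟨x₁, x₂, hx₁, root₁, hx₂, root₂,
    fun z hz _ hne ↦ pisotPoly.norm_lt_one_of_ne hm (by linarith [hx₂.1]) root₂ hz hne,
    (pisotPoly.monic hm).irreducible_iff_irreducible_map_fraction_map.1
      (pisotPoly.irreducible hm)⟩

theorem statement16 (n : ℕ) (hn : 5 ≤ n)
    (p : Polynomial ℤ) (hp : p = X ^ n - 2 * X ^ (n - 1) - X + 1) :
    ∃ x₁ x₂ : ℝ,
      x₁ ∈ Set.Ioo ((1 / 2 : ℝ) ^ ((2 : ℝ) / Real.sqrt ((n : ℝ) - 1))) 1 ∧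
      aeval x₁ p = 0 ∧
      x₂ ∈ Set.Ioo (2 : ℝ) (2 + (2 : ℝ) ^ ((2 : ℝ) - (n : ℝ))) ∧
      aeval x₂ p = 0 ∧
      (∀ z : ℂ, aeval z p = 0 → z ≠ (x₁ : ℂ) → z ≠ (x₂ : ℂ) → ‖z‖ < 1) ∧
      Irreducible (p.map (Int.castRingHom ℚ)) :=
  statement16_general n (by lia) p hp
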